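/- Let 1 < s < 2 and let h : [0,1] → ℝ be continuously differentiable. Set c = (1/Γ(s)) ∫₀¹ (1−t)^{s−1} h(t) dt and define u : [0,1] → ℝ by u(x) = c x − (1/Γ(s)) ∫₀ˣ (x−t)^{s−1} h(t) dt. Then u(0) = u(1) = 0, u is twice differentiable on (0,1), its second derivative u″ is integrable against the kernel (x−t)^{1−s}, and for every x ∈ (0,1), (1/Γ(2−s)) ∫₀ˣ (x−t)^{1−s} u″(t) dt = −h(x); that is, the Caputo derivative of order s of u satisfies (₀ᶜDₓˢ u)(x) = −h(x) on (0,1). (With h = g(·,u(·)) − f, this is the solution representation u(x) = x (₀Iₓˢ(g(·,u)−f))(1) − (₀Iₓˢ(g(·,u)−f))(x) for the Caputo two-point boundary value problem −₀ᶜDₓˢ u + g(x,u) = f, u(0) = u(1) = 0.) -/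

import Mathlib

open MeasureTheory Set Filter Topology

/-- Normalised Riemann-Liouville kernel. -/
noncomputable def rlK (a t : ℝ) : ℝ := if 0 < t then t ^ (a - 1) / Real.Gamma a else 0

/-- Convolution with the kernel. -/
noncomputable def rlJ (a : ℝ) (G : ℝ → ℝ) (x : ℝ) : ℝ := ∫ t, rlK a (x - t) * G t

lemma rlK_of_pos (a : ℝ) {t : ℝ} (ht : 0 < t) : rlK a t = t ^ (a - 1) / Real.Gamma a := if_pos ht

lemma rlK_of_nonpos (a : ℝ) {t : ℝ} (ht : t ≤ 0) : rlK a t = 0 := if_neg (not_lt.2 ht)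

lemma rlK_one_of_pos {t : ℝ} (ht : 0 < t) : rlK 1 t = 1 := by simp [rlK, ht]

lemma rlK_nonneg {a : ℝ} (ha : 0 < a) (t : ℝ) : 0 ≤ rlK a t := by
  unfold rlK
  split_ifs with h
  · have := Real.Gamma_pos_of_pos ha
    positivity
  · exact le_rfl

lemma rlK_meas (a : ℝ) : Measurable (rlK a) := by
  unfold rlK
  refine Measurable.ite measurableSet_Ioi ?_ measurable_const
  fun_prop

lemma rlK_deriv {a : ℝ} (ha : 0 < a) {x : ℝ} (hx : 0 < x) :
    HasDerivAt (rlK (a + 1)) (rlK a x) x := by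
  have hG := (Real.Gamma_pos_of_pos ha).ne'
  have h1 : HasDerivAt (fun t : ℝ => t ^ a / Real.Gamma (a + 1))
      (a * x ^ (a - 1) / Real.Gamma (a + 1)) x :=
    (Real.hasDerivAt_rpow_const (Or.inl hx.ne')).div_const _
  rw [rlK_of_pos _ hx]
  rw [Real.Gamma_add_one ha.ne'] at h1
  have e : a * x ^ (a - 1) / (a * Real.Gamma a) = x ^ (a - 1) / Real.Gamma a := by
    field_simp
  rw [e] at h1
  refine h1.congr_of_eventuallyEq ?_
  filter_upwards [Ioi_mem_nhds hx] with t ht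
  rw [rlK_of_pos _ ht, Real.Gamma_add_one ha.ne', add_sub_cancel_right]

lemma beta_real {α β a : ℝ} (hα : 0 < α) (hβ : 0 < β) (ha : 0 < a) :
    ∫ x in (0:ℝ)..a, x ^ (β - 1) * (a - x) ^ (α - 1) =
      a ^ (α + β - 1) * (Real.Gamma α * Real.Gamma β / Real.Gamma (α + β)) := by
  have h := Complex.betaIntegral_scaled (β : ℂ) (α : ℂ) ha
  rw [Complex.betaIntegral_eq_Gamma_mul_div _ _ (by simpa) (by simpa)] at h
  apply Complex.ofReal_injective
  rw [← intervalIntegral.integral_ofReal]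
  refine Eq.trans ?_ (h.trans ?_)
  · refine intervalIntegral.integral_congr fun x hx => ?_
    rw [uIcc_of_le ha.le] at hx
    rw [Complex.ofReal_mul, Complex.ofReal_cpow hx.1, Complex.ofReal_cpow (sub_nonneg.2 hx.2)]
    push_cast
    rfl
  · rw [Complex.ofReal_mul, Complex.ofReal_cpow ha.le]
    push_cast
    rw [← Complex.Gamma_ofReal, ← Complex.Gamma_ofReal, ← Complex.Gamma_ofReal]
    push_cast
    rw [add_comm (β : ℂ), mul_comm (Complex.Gamma β)]

lemma conv_eq {a : ℝ} (F : ℝ → ℝ) {x : ℝ} (f : ℝ → ℝ)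
    (hF : ∀ t ≤ 0, F t = 0) (hf : ∀ t ∈ Ioo 0 x, f t = F t) :
    (fun t => rlK a (x - t) * F t) =
      (Ioo 0 x).indicator (fun t => (1 / Real.Gamma a) * ((x - t) ^ (a - 1) * f t)) := by
  funext t
  by_cases h : t ∈ Ioo 0 x
  · rw [indicator_of_mem h, rlK_of_pos _ (sub_pos.2 h.2), hf t h]
    ring
  · rw [indicator_of_notMem h]
    rcases le_or_gt t 0 with h0 | h0
    · rw [hF t h0, mul_zero]
    · rw [rlK_of_nonpos, zero_mul]
      have : ¬ t < x := fun h1 => h ⟨h0, h1⟩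
      linarith

lemma conv_integral {a : ℝ} (F : ℝ → ℝ) {x : ℝ} (hx : 0 < x) (f : ℝ → ℝ)
    (hF : ∀ t ≤ 0, F t = 0) (hf : ∀ t ∈ Ioo 0 x, f t = F t) :
    ∫ t, rlK a (x - t) * F t = (1 / Real.Gamma a) * ∫ t in (0:ℝ)..x, (x - t) ^ (a - 1) * f t := by
  rw [conv_eq F f hF hf, integral_indicator measurableSet_Ioo, ← integral_Ioc_eq_integral_Ioo,
    ← intervalIntegral.integral_of_le hx.le, intervalIntegral.integral_const_mul]

lemma rlK_conv {α β : ℝ} (hα : 0 < α) (hβ : 0 < β) (x r : ℝ) :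
    ∫ t, rlK α (x - t) * rlK β (t - r) = rlK (α + β) (x - r) := by
  have e := integral_sub_right_eq_self (μ := volume) (fun t => rlK α ((x - r) - t) * rlK β t) r
  have e2 : ∀ t, x - r - (t - r) = x - t := fun t => by ring
  simp only [e2] at e
  rw [e]
  generalize x - r = a
  rcases le_or_gt a 0 with h | h
  · rw [rlK_of_nonpos _ h]
    rw [← integral_zero ℝ ℝ]
    congr 1
    funext t
    rcases le_or_gt t 0 with h0 | h0
    · rw [rlK_of_nonpos β h0, mul_zero]
    · rw [rlK_of_nonpos α (by linarith), zero_mul]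
  · rw [conv_integral (rlK β) h (fun t => t ^ (β - 1) / Real.Gamma β)
      (fun t ht => rlK_of_nonpos _ ht) (fun t ht => (rlK_of_pos _ ht.1).symm), rlK_of_pos _ h]
    have hb := beta_real hα hβ h
    have e3 : (fun t : ℝ => (a - t) ^ (α - 1) * (t ^ (β - 1) / Real.Gamma β)) =
        fun t => (1 / Real.Gamma β) * (t ^ (β - 1) * (a - t) ^ (α - 1)) := by
      funext t; ring
    rw [e3, intervalIntegral.integral_const_mul, hb]
    have := (Real.Gamma_pos_of_pos hα).ne'
    have := (Real.Gamma_pos_of_pos hβ).ne'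
    field_simp

lemma rlK_conv_int {α β : ℝ} (hα : 0 < α) (hβ : 0 < β) (x r : ℝ) :
    Integrable (fun t => rlK α (x - t) * rlK β (t - r)) := by
  rcases le_or_gt (x - r) 0 with h | h
  · have : (fun t => rlK α (x - t) * rlK β (t - r)) = fun _ => 0 := by
      funext t
      rcases le_or_gt t r with h0 | h0
      · rw [rlK_of_nonpos β (by linarith), mul_zero]
      · rw [rlK_of_nonpos α (by linarith), zero_mul]
    rw [this]; exact integrable_zero _ _ _
  · by_contra hn
    have h1 := rlK_conv hα hβ x r
    rw [integral_undef hn, rlK_of_pos _ h] at h1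
    have := Real.Gamma_pos_of_pos (add_pos hα hβ)
    have : 0 < (x - r) ^ (α + β - 1) / Real.Gamma (α + β) := by positivity
    linarith

lemma rlJ_zero {a : ℝ} {G : ℝ → ℝ} (hG : ∀ t ≤ 0, G t = 0) {x : ℝ} (hx : x ≤ 0) :
    rlJ a G x = 0 := by
  unfold rlJ
  rw [← integral_zero ℝ ℝ]
  congr 1
  funext t
  rcases le_or_gt t 0 with h0 | h0
  · rw [hG t h0, mul_zero]
  · rw [rlK_of_nonpos _ (by linarith), zero_mul]

section
variable {G : ℝ → ℝ} {M : ℝ}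

lemma rl_prod_int (hm : Measurable G) (hb : ∀ t, |G t| ≤ M * rlK 1 t)
    {α β : ℝ} (hα : 0 < α) (hβ : 0 < β) (x : ℝ) :
    Integrable (Function.uncurry fun t r => rlK α (x - t) * (rlK β (t - r) * G r))
      (volume.prod volume) := by
  have hmeas : Measurable (Function.uncurry fun t r => rlK α (x - t) * (rlK β (t - r) * G r)) := by
    have := rlK_meas α
    have := rlK_meas β
    unfold Function.uncurry
    fun_prop
  rw [integrable_prod_iff' hmeas.aestronglyMeasurable]
  simp only [Function.uncurry, ← mul_assoc]
  refine ⟨Eventually.of_forall fun r => (rlK_conv_int hα hβ x r).mul_const _, ?_⟩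
  have e : (fun r => ∫ t, ‖rlK α (x - t) * rlK β (t - r) * G r‖) =
      fun r => rlK (α + β) (x - r) * |G r| := by
    funext r
    rw [← rlK_conv hα hβ, ← integral_mul_const]
    congr 1
    funext t
    rw [norm_mul, Real.norm_of_nonneg (mul_nonneg (rlK_nonneg hα _) (rlK_nonneg hβ _)),
      Real.norm_eq_abs]
  rw [e]
  have h1 := (rlK_conv_int (add_pos hα hβ) one_pos x 0).const_mul M
  refine h1.mono' ?_ (Eventually.of_forall fun r => ?_)
  · have := rlK_meas (α + β)
    refine Measurable.aestronglyMeasurable ?_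
    have : Measurable fun r => |G r| := hm.abs
    fun_prop
  · rw [Real.norm_of_nonneg (mul_nonneg (rlK_nonneg (add_pos hα hβ) _) (abs_nonneg _)), sub_zero]
    calc _ ≤ rlK (α + β) (x - r) * (M * rlK 1 r) :=
          mul_le_mul_of_nonneg_left (hb r) (rlK_nonneg (add_pos hα hβ) _)
      _ = _ := by ring

lemma rlJ_conv (hm : Measurable G) (hb : ∀ t, |G t| ≤ M * rlK 1 t)
    {α β : ℝ} (hα : 0 < α) (hβ : 0 < β) (x : ℝ) :
    ∫ t, rlK α (x - t) * rlJ β G t = rlJ (α + β) G x := by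
  have h := integral_integral_swap (rl_prod_int hm hb hα hβ x)
  simp only [integral_const_mul] at h
  unfold rlJ
  rw [h]
  congr 1
  funext r
  simp only [← mul_assoc]
  rw [integral_mul_const, rlK_conv hα hβ]

lemma rlJ_conv_int (hm : Measurable G) (hb : ∀ t, |G t| ≤ M * rlK 1 t)
    {α β : ℝ} (hα : 0 < α) (hβ : 0 < β) (x : ℝ) :
    Integrable fun t => rlK α (x - t) * rlJ β G t := by
  have h := (rl_prod_int hm hb hα hβ x).integral_prod_left
  simpa only [Function.uncurry, integral_const_mul, rlJ] using h

lemma rlJ_cont (hm : Measurable G) (hb : ∀ t, |G t| ≤ M * rlK 1 t) (hM : 0 ≤ M)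
    (hc : ∀ t ≠ 0, ContinuousAt G t) {a : ℝ} (ha : 0 < a) : Continuous (rlJ a G) := by
  have e : rlJ a G = fun x => ∫ t, rlK a t * G (x - t) := by
    funext x
    unfold rlJ
    rw [← integral_sub_left_eq_self (fun t => rlK a t * G (x - t)) volume x]
    simp
  rw [e, continuous_iff_continuousAt]
  intro x₀
  refine continuousAt_of_dominated (bound := fun t => M * (rlK 1 (x₀ + 1 - t) * rlK a (t - 0)))
    ?_ ?_ ((rlK_conv_int one_pos ha _ _).const_mul M) ?_
  · refine Eventually.of_forall fun x => Measurable.aestronglyMeasurable ?_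
    have := rlK_meas a
    fun_prop
  · filter_upwards [Iio_mem_nhds (show x₀ < x₀ + 1 by linarith)] with x hx
    refine Eventually.of_forall fun t => ?_
    rw [norm_mul, Real.norm_of_nonneg (rlK_nonneg ha _), Real.norm_eq_abs, sub_zero]
    have h1 : rlK 1 (x - t) ≤ rlK 1 (x₀ + 1 - t) := by
      rcases le_or_gt (x - t) 0 with h | h
      · rw [rlK_of_nonpos _ h]; exact rlK_nonneg one_pos _
      · have : x < x₀ + 1 := hx
        rw [rlK_one_of_pos h, rlK_one_of_pos (by linarith)]
    calc _ ≤ rlK a t * (M * rlK 1 (x₀ + 1 - t)) :=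
          mul_le_mul_of_nonneg_left ((hb _).trans (mul_le_mul_of_nonneg_left h1 hM))
            (rlK_nonneg ha _)
      _ = _ := by ring
  · have : ∀ᵐ t : ℝ, t ≠ x₀ := Measure.ae_ne volume x₀
    filter_upwards [this] with t ht
    have h2 : ContinuousAt G (x₀ - t) := hc _ (sub_ne_zero.2 ht.symm)
    refine continuousAt_const.mul ?_
    exact ContinuousAt.comp (f := fun x => x - t) (g := G) h2 (by fun_prop)

lemma rlJ_deriv (hm : Measurable G) (hb : ∀ t, |G t| ≤ M * rlK 1 t) (hM : 0 ≤ M)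
    (hG0 : ∀ t ≤ 0, G t = 0)
    (hc : ∀ t ≠ 0, ContinuousAt G t) {a : ℝ} (ha : 0 < a) {x : ℝ} (hx : 0 < x) :
    HasDerivAt (rlJ (a + 1) G) (rlJ a G x) x := by
  have hcont := rlJ_cont hm hb hM hc ha
  have h1 : HasDerivAt (fun y => ∫ t in (0:ℝ)..y, rlJ a G t) (rlJ a G x) x :=
    intervalIntegral.integral_hasDerivAt_right (hcont.intervalIntegrable _ _)
      (hcont.stronglyMeasurableAtFilter _ _) hcont.continuousAt
  refine h1.congr_of_eventuallyEq ?_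
  filter_upwards [Ioi_mem_nhds hx] with y hy
  rw [add_comm, ← rlJ_conv hm hb one_pos ha,
    conv_integral (rlJ a G) hy (rlJ a G) (fun t ht => rlJ_zero hG0 ht) (fun _ _ => rfl)]
  simp
end

lemma exists_G (h : ℝ → ℝ) (hC1 : ContDiffOn ℝ 1 h (Set.Icc 0 1)) :
    ∃ (G : ℝ → ℝ) (M : ℝ), Measurable G ∧ (∀ t, |G t| ≤ M * rlK 1 t) ∧ 0 ≤ M ∧
      (∀ t ≤ 0, G t = 0) ∧ (∀ t ≠ 0, ContinuousAt G t) ∧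
      ∀ x ∈ Ioc (0:ℝ) 1, h x = h 0 * rlK 1 x + rlJ 1 G x := by
  have hd : ContinuousOn (derivWithin h (Icc 0 1)) (Icc 0 1) :=
    hC1.continuousOn_derivWithin (uniqueDiffOn_Icc zero_lt_one) le_rfl
  let g : ℝ → ℝ := IccExtend (zero_le_one (α := ℝ)) ((Icc (0:ℝ) 1).domRestrict (derivWithin h (Icc 0 1)))
  have hg : Continuous g := (continuousOn_iff_continuous_domRestrict.1 hd).Icc_extend'
  have hge : ∀ t ∈ Icc (0:ℝ) 1, g t = derivWithin h (Icc 0 1) t := fun t ht => by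
    simp only [g]
    rw [IccExtend_of_mem _ _ ht]; rfl
  obtain ⟨M, hM⟩ := isCompact_Icc.exists_bound_of_continuousOn hd
  have hM0 : 0 ≤ M := (norm_nonneg _).trans (hM 0 (by simp))
  have hgM : ∀ t, |g t| ≤ M := fun t => hM _ (projIcc (0:ℝ) 1 zero_le_one t).2
  refine ⟨(Ioi 0).indicator g, M, hg.measurable.indicator measurableSet_Ioi, ?_, hM0, ?_, ?_, ?_⟩
  · intro t
    rcases le_or_gt t 0 with h0 | h0
    · simp [rlK_of_nonpos _ h0, h0]
    · rw [indicator_of_mem (show t ∈ Ioi 0 from h0), rlK_one_of_pos h0, mul_one]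
      exact hgM t
  · intro t ht
    simp [ht]
  · intro t ht
    rcases lt_or_gt_of_ne ht with h0 | h0
    · refine (continuousAt_const (y := (0:ℝ))).congr ?_
      filter_upwards [Iio_mem_nhds h0] with y hy
      have : y < 0 := hy
      simp [this.le]
    · refine hg.continuousAt.congr ?_
      filter_upwards [Ioi_mem_nhds h0] with y hy
      rw [indicator_of_mem hy]
  · intro x hx
    unfold rlJ
    rw [conv_integral _ hx.1 g (fun t ht => by simp [ht])
      (fun t ht => by rw [indicator_of_mem (show t ∈ Ioi 0 from ht.1)]), rlK_one_of_pos hx.1]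
    have h1 : ∫ t in (0:ℝ)..x, g t = h x - h 0 := by
      refine intervalIntegral.integral_eq_sub_of_hasDerivAt_of_le hx.1.le
        (hC1.continuousOn.mono (Icc_subset_Icc_right hx.2)) (fun t ht => ?_)
        (hg.intervalIntegrable _ _)
      have ht' : t ∈ Icc (0:ℝ) 1 := ⟨ht.1.le, ht.2.le.trans hx.2⟩
      rw [hge t ht']
      exact ((hC1.differentiableOn one_ne_zero) t ht').hasDerivWithinAt.hasDerivAt
        (Icc_mem_nhds ht.1 (ht.2.trans_le hx.2))
    simp [h1]

/-- Solution representation for the Caputo two-point boundary value problem: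
for `1 < s < 2`, `h` continuously differentiable on `[0,1]`,
`c = (1/Γ(s)) ∫₀¹ (1-t)^{s-1} h t dt` and
`u x = c x - (1/Γ(s)) ∫₀ˣ (x-t)^{s-1} h t dt`, one has `u 0 = u 1 = 0`, `u` is twice
differentiable on `(0,1)`, its second derivative `u''` is integrable against the
kernel `(x-t)^{1-s}`, and `(1/Γ(2-s)) ∫₀ˣ (x-t)^{1-s} u'' t dt = -h x` on `(0,1)`;
i.e. the Caputo derivative of order `s` of `u` equals `-h`. -/
theorem caputo_bvp_solution_representation (s : ℝ) (hs1 : 1 < s) (hs2 : s < 2)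
    (h : ℝ → ℝ) (hC1 : ContDiffOn ℝ 1 h (Set.Icc 0 1))
    (c : ℝ) (hcdef : c = (1 / Real.Gamma s) * ∫ t in (0:ℝ)..1, (1 - t) ^ (s - 1) * h t)
    (u : ℝ → ℝ)
    (hu : ∀ x, u x = c * x
      - (1 / Real.Gamma s) * ∫ t in (0:ℝ)..x, (x - t) ^ (s - 1) * h t) :
    u 0 = 0 ∧ u 1 = 0 ∧
    ∃ u' u'' : ℝ → ℝ,
      (∀ x ∈ Set.Ioo (0:ℝ) 1, HasDerivAt u (u' x) x) ∧
      (∀ x ∈ Set.Ioo (0:ℝ) 1, HasDerivAt u' (u'' x) x) ∧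
      (∀ x ∈ Set.Ioo (0:ℝ) 1,
        IntervalIntegrable (fun t => (x - t) ^ (1 - s) * u'' t) MeasureTheory.volume 0 x) ∧
      (∀ x ∈ Set.Ioo (0:ℝ) 1,
        (1 / Real.Gamma (2 - s)) * ∫ t in (0:ℝ)..x, (x - t) ^ (1 - s) * u'' t = -h x) := by
  refine ⟨by simp [hu], by rw [hu, hcdef]; simp, ?_⟩
  obtain ⟨G, M, hm, hb, hM, hG0, hc, hrep⟩ := exists_G h hC1
  have hs0 : 0 < s := by linarith
  have hsm : 0 < s - 1 := by linarith
  have h2s : 0 < 2 - s := by linarith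
  -- general convolution formula
  have conv1 : ∀ {α β : ℝ}, 0 < α → 0 < β → ∀ x,
      Integrable (fun t => rlK α (x - t) * (h 0 * rlK β t + rlJ β G t)) := by
    intro α β hα hβ x
    have i1 := (rlK_conv_int hα hβ x 0).const_mul (h 0)
    have i2 := rlJ_conv_int hm hb hα hβ x
    refine (i1.add i2).congr (Eventually.of_forall fun t => ?_)
    simp only [Pi.add_apply, sub_zero]
    ring
  have conv2 : ∀ {α β : ℝ}, 0 < α → 0 < β → ∀ x,
      ∫ t, rlK α (x - t) * (h 0 * rlK β t + rlJ β G t) =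
        h 0 * rlK (α + β) x + rlJ (α + β) G x := by
    intro α β hα hβ x
    have i1 := (rlK_conv_int hα hβ x 0).const_mul (h 0)
    have i2 := rlJ_conv_int hm hb hα hβ x
    have e := rlK_conv hα hβ x 0
    rw [sub_zero] at e
    rw [← e, ← rlJ_conv hm hb hα hβ, ← integral_const_mul, ← integral_add i1 i2]
    congr 1
    funext t
    rw [sub_zero]
    ring
  have hz : ∀ (β t : ℝ), t ≤ 0 → h 0 * rlK β t + rlJ β G t = 0 := fun β t ht => by
    rw [rlK_of_nonpos _ ht, rlJ_zero hG0 ht]; ring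
  have hur : ∀ x ∈ Ioo (0:ℝ) 1, u x = c * x - (h 0 * rlK (s + 1) x + rlJ (s + 1) G x) := by
    intro x hx
    rw [hu, ← conv2 hs0 one_pos x, conv_integral _ hx.1 h (hz 1)]
    exact fun t ht => hrep t ⟨ht.1, ht.2.le.trans hx.2.le⟩
  refine ⟨fun x => c - (h 0 * rlK s x + rlJ s G x),
    fun x => - (h 0 * rlK (s - 1) x + rlJ (s - 1) G x), ?_, ?_, ?_, ?_⟩
  · intro x hx
    have h1 : HasDerivAt (fun x => c * x - (h 0 * rlK (s + 1) x + rlJ (s + 1) G x))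
        (c * 1 - (h 0 * rlK s x + rlJ s G x)) x :=
      ((hasDerivAt_id x).const_mul c).sub
        (((rlK_deriv hs0 hx.1).const_mul (h 0)).add (rlJ_deriv hm hb hM hG0 hc hs0 hx.1))
    rw [mul_one] at h1
    refine h1.congr_of_eventuallyEq ?_
    filter_upwards [Ioo_mem_nhds hx.1 hx.2] with y hy using hur y hy
  · intro x hx
    have k1 := rlK_deriv hsm hx.1
    have k2 := rlJ_deriv hm hb hM hG0 hc hsm hx.1
    rw [sub_add_cancel] at k1 k2
    exact ((k1.const_mul (h 0)).add k2).const_sub c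
  · intro x hx
    have i := conv1 h2s hsm x
    rw [conv_eq _ _ (hz _) (fun _ _ => rfl), integrable_indicator_iff measurableSet_Ioo,
      ← integrableOn_Ioc_iff_integrableOn_Ioo,
      ← intervalIntegrable_iff_integrableOn_Ioc_of_le hx.1.le] at i
    have i2 := i.const_mul (- Real.Gamma (2 - s))
    have hne := (Real.Gamma_pos_of_pos h2s).ne'
    convert i2 using 2 with t
    rw [show (2 - s - 1 : ℝ) = 1 - s by ring]
    field_simp
  · intro x hx
    have i := conv2 h2s hsm x
    rw [conv_integral _ hx.1 _ (hz _) (fun _ _ => rfl), show (2 - s - 1 : ℝ) = 1 - s by ring,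
      show (2 - s + (s - 1) : ℝ) = 1 by ring, ← hrep x ⟨hx.1, hx.2.le⟩] at i
    simp only [mul_neg, intervalIntegral.integral_neg]
    rw [i]
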